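/- (Theorem 2, worst-case mean-excess travel time with support set) Let a, b ∈ ℝⁿ with a ≤ b componentwise, let ξ̂¹,…,ξ̂ᴺ ∈ [a,b] (N ≥ 1) with empirical distribution F_N, let v ∈ ℝⁿ, α ∈ (0,1] and ε ≥ 0. Then the infimum over t ∈ ℝ of t + (1/α)·sup{ ∫ h(v,t,ξ) dμ(ξ) : μ a Borel probability measure supported on [a,b] with d_W(F_N,μ) ≤ ε } equals the optimal value of the convex program minimizing t + (1/α)·((1/N)·Σ_{i=1}^N s_i + λ·ε) over t ∈ ℝ, s ∈ ℝᴺ, λ ∈ ℝ, and γ_i, η_i ∈ ℝⁿ (i = 1,…,N) subject to ⟨v + γ_i − η_i, ξ̂ⁱ⟩ − ⟨γ_i,a⟩ + ⟨η_i,b⟩ − t ≤ s_i, ‖v + γ_i − η_i‖_q ≤ λ, γ_i ≥ 0, η_i ≥ 0 and s_i ≥ 0 for all i. -/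

import Mathlib

open MeasureTheory Filter Topology
open scoped ENNReal BigOperators

/-- The ℓp norm on ℝⁿ, for `p ∈ [1,∞]` (an extended nonnegative real). -/
noncomputable def lpNorm {n : ℕ} (p : ℝ≥0∞) (x : Fin n → ℝ) : ℝ :=
  if p = ∞ then ⨆ i, |x i| else (∑ i, |x i| ^ p.toReal) ^ (1 / p.toReal)

/-- The Euclidean inner product on ℝⁿ. -/
def ip {n : ℕ} (w x : Fin n → ℝ) : ℝ := ∑ i, w i * x i


/-- `h(v,t,ξ) = max(⟨ξ,v⟩ − t, 0)`. -/
noncomputable def hfun {n : ℕ} (v : Fin n → ℝ) (t : ℝ) (ξ : Fin n → ℝ) : ℝ :=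
  max (ip ξ v - t) 0

/-- The empirical distribution `(1/N)·Σᵢ δ_{ξⁱ}` of `N` samples. -/
noncomputable def empirical {n : ℕ} (N : ℕ) (ξ : Fin N → Fin n → ℝ) :
    MeasureTheory.Measure (Fin n → ℝ) :=
  (N : ℝ≥0∞)⁻¹ • ∑ i, MeasureTheory.Measure.dirac (ξ i)

/-- The Wasserstein distance (valued in `ℝ≥0∞`) between two Borel probability measures
on ℝⁿ, with ground metric `‖·‖_p`: the infimum over couplings `K` (probability measures on
ℝⁿ × ℝⁿ with the prescribed marginals) of `∫ ‖x − y‖_p dK(x,y)`. -/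
noncomputable def dW {n : ℕ} (p : ℝ≥0∞) (μ ν : MeasureTheory.Measure (Fin n → ℝ)) : ℝ≥0∞ :=
  ⨅ (K : MeasureTheory.Measure ((Fin n → ℝ) × (Fin n → ℝ)))
    (_ : MeasureTheory.IsProbabilityMeasure K)
    (_ : K.map Prod.fst = μ) (_ : K.map Prod.snd = ν),
    ∫⁻ z, ENNReal.ofReal (lpNorm p (z.1 - z.2)) ∂K


/-! ### Norm facts -/

lemma lpNorm_eq_norm {n : ℕ} (p : ℝ≥0∞) (hp : 1 ≤ p) (x : Fin n → ℝ) :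
    _root_.lpNorm p x = ‖WithLp.toLp p x‖ := by
  unfold _root_.lpNorm
  split_ifs with h
  · subst h
    simp [PiLp.norm_eq_ciSup]
  · have : 0 < p.toReal := ENNReal.toReal_pos (by positivity) h
    simp [PiLp.norm_eq_sum this]

lemma lpNorm_nonneg {n : ℕ} (p : ℝ≥0∞) (hp : 1 ≤ p) (x : Fin n → ℝ) : 0 ≤ _root_.lpNorm p x := by
  have : Fact (1 ≤ p) := ⟨hp⟩
  rw [lpNorm_eq_norm p hp]; exact norm_nonneg _

lemma lpNorm_zero {n : ℕ} (p : ℝ≥0∞) (hp : 1 ≤ p) : _root_.lpNorm p (0 : Fin n → ℝ) = 0 := by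
  have : Fact (1 ≤ p) := ⟨hp⟩
  rw [lpNorm_eq_norm p hp]; simp

lemma lpNorm_add_le {n : ℕ} (p : ℝ≥0∞) (hp : 1 ≤ p) (x y : Fin n → ℝ) :
    _root_.lpNorm p (x + y) ≤ _root_.lpNorm p x + _root_.lpNorm p y := by
  have : Fact (1 ≤ p) := ⟨hp⟩
  simp only [lpNorm_eq_norm p hp, WithLp.toLp_add]; exact norm_add_le _ _

lemma lpNorm_neg {n : ℕ} (p : ℝ≥0∞) (hp : 1 ≤ p) (x : Fin n → ℝ) :
    _root_.lpNorm p (-x) = _root_.lpNorm p x := by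
  have : Fact (1 ≤ p) := ⟨hp⟩
  simp only [lpNorm_eq_norm p hp, WithLp.toLp_neg, norm_neg]

lemma lpNorm_smul {n : ℕ} (p : ℝ≥0∞) (hp : 1 ≤ p) (c : ℝ) (hc : 0 ≤ c) (x : Fin n → ℝ) :
    _root_.lpNorm p (c • x) = c * _root_.lpNorm p x := by
  have : Fact (1 ≤ p) := ⟨hp⟩
  simp only [lpNorm_eq_norm p hp, WithLp.toLp_smul, norm_smul, Real.norm_of_nonneg hc]

lemma lpNorm_continuous {n : ℕ} (p : ℝ≥0∞) (hp : 1 ≤ p) :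
    Continuous (fun x : Fin n → ℝ => _root_.lpNorm p x) := by
  have : Fact (1 ≤ p) := ⟨hp⟩
  simp only [lpNorm_eq_norm p hp]
  exact (PiLp.continuous_toLp p _).norm

lemma conj_cases (p q : ℝ≥0∞) (hpq : 1 / p + 1 / q = 1) :
    (p = 1 ∧ q = ∞) ∨ (p = ∞ ∧ q = 1) ∨
      (p ≠ ∞ ∧ q ≠ ∞ ∧ p.toReal.HolderConjugate q.toReal) := by
  have h : ENNReal.HolderConjugate p q := ⟨by simpa using hpq⟩
  by_cases hp : p = ∞
  · right; left; subst hp; simpa using hpq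
  by_cases hq : q = ∞
  · left; subst hq; simpa using hpq
  · exact Or.inr (Or.inr ⟨hp, hq, ENNReal.HolderConjugate.toReal_of_ne_top hp hq⟩)

lemma one_le_conj (p q : ℝ≥0∞) (hpq : 1 / p + 1 / q = 1) : 1 ≤ q := by
  have : 1 / q ≤ 1 := le_of_le_of_eq le_add_self hpq
  simpa using this

lemma ip_le_one_top {n : ℕ} (u z : Fin n → ℝ) : ip u z ≤ _root_.lpNorm ∞ u * _root_.lpNorm 1 z := by
  simp only [ip, _root_.lpNorm, if_true, ENNReal.one_ne_top, if_false, ENNReal.toReal_one, Real.rpow_one,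
    div_one, Finset.mul_sum]
  refine Finset.sum_le_sum fun i _ => ?_
  calc u i * z i ≤ |u i| * |z i| := by rw [← abs_mul]; exact le_abs_self _
    _ ≤ _ := by
      gcongr
      exact le_ciSup (f := fun i => |u i|) (Set.finite_range _).bddAbove i

lemma ip_comm' {n : ℕ} (u z : Fin n → ℝ) : ip u z = ip z u := by
  simp only [ip, mul_comm]

lemma ip_holder {n : ℕ} (p q : ℝ≥0∞) (hpq : 1 / p + 1 / q = 1) (u z : Fin n → ℝ) :
    ip u z ≤ _root_.lpNorm q u * _root_.lpNorm p z := by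
  rcases conj_cases p q hpq with ⟨rfl, rfl⟩ | ⟨rfl, rfl⟩ | ⟨hp, hq, h⟩
  · exact ip_le_one_top u z
  · rw [ip_comm', mul_comm]; exact ip_le_one_top z u
  · simp only [ip, _root_.lpNorm, hp, hq, if_false]
    exact Real.inner_le_Lp_mul_Lq _ _ _ h.symm

lemma ip_attain {n : ℕ} (hn : 1 ≤ n) (p q : ℝ≥0∞) (hpq : 1 / p + 1 / q = 1) (z : Fin n → ℝ) :
    ∃ u : Fin n → ℝ, _root_.lpNorm q u ≤ 1 ∧ ip u z = _root_.lpNorm p z := by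
  have : Nonempty (Fin n) := ⟨⟨0, hn⟩⟩
  have hsg : ∀ x : ℝ, |(SignType.sign x : ℝ)| ≤ 1 := by
    intro x
    rcases lt_trichotomy x 0 with h | h | h <;> simp [h]
  rcases conj_cases p q hpq with ⟨rfl, rfl⟩ | ⟨rfl, rfl⟩ | ⟨hp, hq, h⟩
  · refine ⟨fun i => (SignType.sign (z i) : ℝ), ?_, ?_⟩
    · simp only [_root_.lpNorm, if_true]
      exact ciSup_le fun i => hsg _
    · simp [_root_.lpNorm, ip]
  · obtain ⟨i, hi⟩ := exists_eq_ciSup_of_finite (f := fun i => |z i|)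
    refine ⟨fun j => if j = i then (SignType.sign (z i) : ℝ) else 0, ?_, ?_⟩
    · simp only [_root_.lpNorm, ENNReal.one_ne_top, if_false, ENNReal.toReal_one, Real.rpow_one, div_one]
      rw [Finset.sum_eq_single i]
      · simpa using hsg _
      · intro j _ hj; simp [hj]
      · simp
    · simp [_root_.lpNorm, ip, ← hi]
  · obtain ⟨g, hg, hg'⟩ := (NNReal.isGreatest_Lp Finset.univ (fun i => ‖z i‖₊) h).1
    refine ⟨fun i => (SignType.sign (z i) : ℝ) * g i, ?_, ?_⟩
    · simp only [_root_.lpNorm, hq, if_false]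
      refine Real.rpow_le_one (Finset.sum_nonneg fun i _ => by positivity) ?_
        (by have := h.symm.pos; positivity)
      have hg2 : (∑ i, (g i : ℝ) ^ q.toReal) ≤ 1 := by exact_mod_cast hg
      refine le_trans (Finset.sum_le_sum fun i _ => ?_) hg2
      refine Real.rpow_le_rpow (abs_nonneg _) ?_ h.symm.nonneg
      rw [abs_mul]
      calc _ ≤ 1 * |(g i : ℝ)| := by gcongr; exact hsg _
        _ = _ := by simp
    · simp only [_root_.lpNorm, hp, if_false, ip]
      have := congrArg NNReal.toReal hg'
      push_cast at this
      simp only [Real.norm_eq_abs] at this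
      rw [← this]
      refine Finset.sum_congr rfl fun i _ => ?_
      rw [← sign_mul_self (z i)]; ring

/-! ### Minimax -/

lemma minimax_aux {E F : Type*} [TopologicalSpace E] [AddCommGroup E] [Module ℝ E]
    [IsTopologicalAddGroup E] [ContinuousSMul ℝ E]
    [TopologicalSpace F] [AddCommGroup F] [Module ℝ F]
    [IsTopologicalAddGroup F] [ContinuousSMul ℝ F]
    (X : Set E) (Y : Set F) (f : E → F → ℝ) (neX : X.Nonempty) (kX : IsCompact X)
    (cX : Convex ℝ X) (cY : Convex ℝ Y)
    (hcx : ∀ y, Continuous fun x => f x y) (hcy : ∀ x, Continuous fun y => f x y)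
    (hax : ∀ y x x' (c d : ℝ), c + d = 1 → f (c • x + d • x') y = c * f x y + d * f x' y)
    (hay : ∀ x y y' (c d : ℝ), c + d = 1 → f x (c • y + d • y') = c * f x y + d * f x y')
    (M : ℝ) (h : ∀ x ∈ X, ∃ y ∈ Y, M < f x y) :
    ∃ y0 ∈ Y, ∀ x ∈ X, M < f x y0 := by
  choose! g hgY hg using h
  obtain ⟨s, hs, hcov⟩ := kX.elim_nhds_subcover (fun x => {x' | M < f x' (g x)})
    (fun x hx => (isOpen_lt continuous_const (hcx (g x))).mem_nhds (hg x hx))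
  refine Sion.exists_lt_iInf_of_lt_iInf_of_finite (X := X) (Y := Y) (f := f) neX kX
    (fun y _ => (hcx y).lowerSemicontinuous.lowerSemicontinuousOn _) ?_ cY
    (fun x _ => (hcy x).upperSemicontinuous.upperSemicontinuousOn _) ?_ cX
    (s := g '' (s : Set E)) (s.finite_toSet.image g) ?_ ?_
  · intro y _
    refine ConvexOn.quasiconvexOn ⟨cX, fun x _ x' _ c d _ _ hcd => ?_⟩
    simp only [hax y x x' c d hcd, smul_eq_mul, le_refl]
  · intro x _
    refine ConcaveOn.quasiconcaveOn ⟨cY, fun y _ y' _ c d _ _ hcd => ?_⟩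
    simp only [hay x y y' c d hcd, smul_eq_mul, le_refl]
  · rintro _ ⟨x, hx, rfl⟩
    exact hgY x (hs x hx)
  · intro x hx
    have := hcov hx
    simp only [Set.mem_iUnion, Set.mem_ofPred_eq] at this
    obtain ⟨x0, hx0, hlt⟩ := this
    exact ⟨g x0, ⟨x0, hx0, rfl⟩, hlt⟩

/-! ### Weak duality -/

lemma hfun_continuous {n : ℕ} (v : Fin n → ℝ) (t : ℝ) : Continuous (hfun v t) := by
  unfold hfun ip; fun_prop

lemma hfun_nonneg {n : ℕ} (v : Fin n → ℝ) (t : ℝ) (x : Fin n → ℝ) : 0 ≤ hfun v t x :=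
  le_max_right _ _

lemma weak_pointwise {n : ℕ} (p q : ℝ≥0∞) (hp : 1 ≤ p) (hpq : 1 / p + 1 / q = 1)
    (a b v ξ γ η y : Fin n → ℝ) (t s lam : ℝ)
    (h1 : ip (v + γ - η) ξ - ip γ a + ip η b - t ≤ s)
    (h2 : _root_.lpNorm q (v + γ - η) ≤ lam) (h3 : ∀ j, 0 ≤ γ j) (h4 : ∀ j, 0 ≤ η j) (h5 : 0 ≤ s)
    (hy : ∀ i, a i ≤ y i ∧ y i ≤ b i) :
    hfun v t y ≤ s + lam * _root_.lpNorm p (ξ - y) := by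
  have hq := one_le_conj p q hpq
  have hl : 0 ≤ lam := (lpNorm_nonneg q hq _).trans h2
  have hn := lpNorm_nonneg p hp (ξ - y)
  refine max_le ?_ (by positivity)
  have e1 : ip y v ≤ ip (v + γ - η) ξ + ip (v + γ - η) (y - ξ) - ip γ a + ip η b := by
    simp only [ip, ← Finset.sum_add_distrib, ← Finset.sum_sub_distrib]
    refine Finset.sum_le_sum fun i _ => ?_
    simp only [Pi.add_apply, Pi.sub_apply]
    nlinarith [mul_nonneg (h3 i) (sub_nonneg.2 (hy i).1), mul_nonneg (h4 i) (sub_nonneg.2 (hy i).2)]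
  have e2 := ip_holder p q hpq (v + γ - η) (y - ξ)
  have e3 : _root_.lpNorm p (y - ξ) = _root_.lpNorm p (ξ - y) := by
    rw [← lpNorm_neg p hp, neg_sub]
  rw [e3] at e2
  have e4 := mul_le_mul_of_nonneg_right h2 hn
  linarith

lemma weak_measure {n N : ℕ} (hN : 1 ≤ N) (p : ℝ≥0∞) (hp : 1 ≤ p)
    (ξ : Fin N → Fin n → ℝ) (B : Set (Fin n → ℝ)) (h : (Fin n → ℝ) → ℝ) (hc : Continuous h)
    (h0 : ∀ x, 0 ≤ h x) (s : Fin N → ℝ) (hs : ∀ i, 0 ≤ s i) (lam : ℝ) (hl : 0 ≤ lam)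
    (hh : ∀ i, ∀ y ∈ B, h y ≤ s i + lam * _root_.lpNorm p (ξ i - y))
    (μ : Measure (Fin n → ℝ)) (hμ : μ Bᶜ = 0) (ε : ℝ) (hε : 0 ≤ ε)
    (hd : dW p (empirical N ξ) μ ≤ ENNReal.ofReal ε) :
    ∫ x, h x ∂μ ≤ (1 / (N : ℝ)) * ∑ i, s i + lam * ε := by
  have : Nonempty (Fin N) := ⟨⟨0, hN⟩⟩
  have hN0 : (0 : ℝ) < N := by exact_mod_cast hN
  have hsum : 0 ≤ (1 / (N : ℝ)) * ∑ i, s i :=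
    mul_nonneg (by positivity) (Finset.sum_nonneg fun i _ => hs i)
  have hpc := lpNorm_continuous (n := n) p hp
  have key : ∀ δ : ℝ, 0 < δ → ∫ x, h x ∂μ ≤ (1 / (N : ℝ)) * ∑ i, s i + lam * (ε + δ) := by
    intro δ hδ
    have hlt : dW p (empirical N ξ) μ < ENNReal.ofReal (ε + δ) :=
      hd.trans_lt ((ENNReal.ofReal_lt_ofReal_iff (by positivity)).2 (by linarith))
    unfold dW at hlt
    simp only [iInf_lt_iff] at hlt
    obtain ⟨K, hK, hK1, hK2, hcost⟩ := hlt
    let S : (Fin n → ℝ) → ℝ := fun x =>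
      Finset.univ.inf' Finset.univ_nonempty fun i => s i + lam * _root_.lpNorm p (ξ i - x)
    have hSc : Continuous S := by
      refine Continuous.finset_inf'_apply _ fun i _ => ?_
      exact continuous_const.add (continuous_const.mul (hpc.comp (continuous_const.sub continuous_id)))
    have hSξ : ∀ i, S (ξ i) ≤ s i := by
      intro i
      refine (Finset.inf'_le _ (Finset.mem_univ i)).trans ?_
      simp [lpNorm_zero p hp]
    have hS : ∀ x, ∀ y ∈ B, h y ≤ S x + lam * _root_.lpNorm p (x - y) := by
      intro x y hy
      rw [← sub_le_iff_le_add]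
      refine Finset.le_inf' _ _ fun i _ => ?_
      have e1 := hh i y hy
      have e2 := lpNorm_add_le p hp (ξ i - x) (x - y)
      rw [sub_add_sub_cancel] at e2
      have := mul_le_mul_of_nonneg_left e2 hl
      linarith
    have hae : ∀ᵐ z ∂K, z.2 ∈ B := by
      have : ∀ᵐ y ∂(K.map Prod.snd), y ∈ B := by rw [hK2]; exact hμ
      exact ae_of_ae_map measurable_snd.aemeasurable this
    have e1 : ∫⁻ x, ENNReal.ofReal (h x) ∂μ ≤
        ENNReal.ofReal ((1 / (N : ℝ)) * ∑ i, s i + lam * (ε + δ)) := by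
      calc ∫⁻ x, ENNReal.ofReal (h x) ∂μ = ∫⁻ z, ENNReal.ofReal (h z.2) ∂K := by
            rw [← hK2, lintegral_map (by fun_prop) measurable_snd]
        _ ≤ ∫⁻ z, (ENNReal.ofReal (S z.1) + ENNReal.ofReal lam *
              ENNReal.ofReal (_root_.lpNorm p (z.1 - z.2))) ∂K := by
            refine lintegral_mono_ae ?_
            filter_upwards [hae] with z hz
            rw [← ENNReal.ofReal_mul hl]
            exact (ENNReal.ofReal_le_ofReal (hS z.1 z.2 hz)).trans ENNReal.ofReal_add_le
        _ = ∫⁻ z, ENNReal.ofReal (S z.1) ∂K + ENNReal.ofReal lam *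
              ∫⁻ z, ENNReal.ofReal (_root_.lpNorm p (z.1 - z.2)) ∂K := by
            rw [lintegral_add_left, lintegral_const_mul]
            · exact ENNReal.measurable_ofReal.comp
                (hpc.measurable.comp (measurable_fst.sub measurable_snd))
            · exact ENNReal.measurable_ofReal.comp (hSc.measurable.comp measurable_fst)
        _ ≤ ENNReal.ofReal ((1 / (N : ℝ)) * ∑ i, s i) +
              ENNReal.ofReal lam * ENNReal.ofReal (ε + δ) := by
            gcongr
            calc ∫⁻ z, ENNReal.ofReal (S z.1) ∂K
                = ∫⁻ x, ENNReal.ofReal (S x) ∂(K.map Prod.fst) := by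
                  rw [lintegral_map (by fun_prop) measurable_fst]
              _ = (N : ℝ≥0∞)⁻¹ * ∑ i, ENNReal.ofReal (S (ξ i)) := by
                  rw [hK1, empirical, lintegral_smul_measure, lintegral_finsetSum_measure]
                  simp
              _ ≤ (N : ℝ≥0∞)⁻¹ * ∑ i, ENNReal.ofReal (s i) := by
                  gcongr with i
                  exact hSξ i
              _ = _ := by
                  rw [ENNReal.ofReal_mul (by positivity),
                    ENNReal.ofReal_sum_of_nonneg fun i _ => hs i, one_div,
                    ENNReal.ofReal_inv_of_pos hN0, ENNReal.ofReal_natCast]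
        _ = _ := by
            rw [← ENNReal.ofReal_mul hl, ← ENNReal.ofReal_add hsum (by positivity)]
    rw [integral_eq_lintegral_of_nonneg_ae (ae_of_all _ h0) hc.aestronglyMeasurable]
    exact ENNReal.toReal_le_of_le_ofReal (by positivity) e1
  refine le_of_forall_pos_le_add fun δ hδ => ?_
  have := key (δ / (lam + 1)) (by positivity)
  have h2 : lam * (δ / (lam + 1)) ≤ δ := by
    rw [mul_div_assoc', div_le_iff₀ (by positivity)]; nlinarith
  linarith

/-! ### Construction of transport plans -/

lemma construct {n N : ℕ} (hN : 1 ≤ N) (p : ℝ≥0∞) (hp : 1 ≤ p)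
    (ξ y : Fin N → Fin n → ℝ) (B : Set (Fin n → ℝ))
    (hB : MeasurableSet B) (hξ : ∀ i, ξ i ∈ B) (hy : ∀ i, y i ∈ B)
    (w : Fin N → ℝ) (hw0 : ∀ i, 0 ≤ w i) (hw1 : ∀ i, w i ≤ 1)
    (h : (Fin n → ℝ) → ℝ) (ε : ℝ)
    (hcost : (1 / (N : ℝ)) * ∑ i, w i * _root_.lpNorm p (ξ i - y i) ≤ ε) :
    ∃ μ : Measure (Fin n → ℝ), IsProbabilityMeasure μ ∧ μ Bᶜ = 0 ∧
      dW p (empirical N ξ) μ ≤ ENNReal.ofReal ε ∧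
      ∫ x, h x ∂μ = (1 / (N : ℝ)) * ∑ i, ((1 - w i) * h (ξ i) + w i * h (y i)) := by
  have hN0 : (0 : ℝ) < N := by exact_mod_cast hN
  have hNe : (N : ℝ≥0∞) ≠ 0 := by exact_mod_cast (by omega : N ≠ 0)
  let K : Measure ((Fin n → ℝ) × (Fin n → ℝ)) := (N : ℝ≥0∞)⁻¹ • ∑ i,
    (ENNReal.ofReal (1 - w i) • Measure.dirac (ξ i, ξ i) +
      ENNReal.ofReal (w i) • Measure.dirac (ξ i, y i))
  have hw : ∀ i, ENNReal.ofReal (1 - w i) + ENNReal.ofReal (w i) = 1 := by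
    intro i
    rw [← ENNReal.ofReal_add (by linarith [hw1 i]) (hw0 i)]; simp
  let μ : Measure (Fin n → ℝ) := (N : ℝ≥0∞)⁻¹ • ∑ i,
    (ENNReal.ofReal (1 - w i) • Measure.dirac (ξ i) + ENNReal.ofReal (w i) • Measure.dirac (y i))
  have hKp : IsProbabilityMeasure K := by
    constructor
    simp [K, hw, ENNReal.inv_mul_cancel hNe (ENNReal.natCast_ne_top N)]
  have hK2 : K.map Prod.snd = μ := by
    ext A hA
    rw [Measure.map_apply measurable_snd hA]
    simp [K, μ, Measure.dirac_apply', hA, measurable_snd hA, Set.indicator]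
    rfl
  have hK1 : K.map Prod.fst = empirical N ξ := by
    ext A hA
    rw [Measure.map_apply measurable_fst hA]
    simp only [K, empirical, Measure.smul_apply, Measure.finsetSum_apply, Measure.add_apply,
      Measure.dirac_apply' _ hA, Measure.dirac_apply' _ (measurable_fst hA), Set.indicator,
      smul_eq_mul]
    congr 1
    refine Finset.sum_congr rfl fun i _ => ?_
    classical
    change ENNReal.ofReal (1 - w i) * (if ξ i ∈ A then 1 else 0) +
      ENNReal.ofReal (w i) * (if ξ i ∈ A then 1 else 0) = if ξ i ∈ A then 1 else 0
    rw [← add_mul, hw, one_mul]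
  have hμp : IsProbabilityMeasure μ := by
    rw [← hK2]; exact Measure.isProbabilityMeasure_map measurable_snd.aemeasurable
  refine ⟨μ, hμp, ?_, ?_, ?_⟩
  · simp [μ, Measure.dirac_apply' _ hB.compl, hξ, hy]
  · unfold dW
    refine (iInf_le _ K).trans <| (iInf_le _ hKp).trans <| (iInf_le _ hK1).trans <|
      (iInf_le _ hK2).trans ?_
    refine le_trans ?_ (ENNReal.ofReal_le_ofReal hcost)
    have hnn : ∀ i, 0 ≤ w i * _root_.lpNorm p (ξ i - y i) := fun i =>
      mul_nonneg (hw0 i) (lpNorm_nonneg p hp _)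
    rw [ENNReal.ofReal_mul (by positivity), ENNReal.ofReal_sum_of_nonneg fun i _ => hnn i, one_div,
      ENNReal.ofReal_inv_of_pos hN0, ENNReal.ofReal_natCast]
    simp only [K]
    rw [lintegral_smul_measure, lintegral_finsetSum_measure]
    simp only [lintegral_add_measure, lintegral_smul_measure, lintegral_dirac, sub_self,
      lpNorm_zero p hp, smul_eq_mul, ENNReal.ofReal_zero, mul_zero, zero_add]
    gcongr with i
    rw [ENNReal.ofReal_mul (hw0 i)]
  · have hi : ∀ i : Fin N, ∀ i' ∈ (Finset.univ : Finset (Fin N)), Integrable h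
      (ENNReal.ofReal (1 - w i') • Measure.dirac (ξ i') +
        ENNReal.ofReal (w i') • Measure.dirac (y i')) := by
      intro _ i _
      exact ((integrable_dirac (by simp)).smul_measure ENNReal.ofReal_ne_top).add_measure
        ((integrable_dirac (by simp)).smul_measure ENNReal.ofReal_ne_top)
    simp only [μ]
    rw [integral_smul_measure, integral_finsetSum_measure (hi ⟨0, hN⟩)]
    simp only [ENNReal.toReal_inv, ENNReal.toReal_natCast, smul_eq_mul, one_div]
    congr 1
    refine Finset.sum_congr rfl fun i _ => ?_
    rw [integral_add_measure ((integrable_dirac (by simp)).smul_measure ENNReal.ofReal_ne_top)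
        ((integrable_dirac (by simp)).smul_measure ENNReal.ofReal_ne_top)]
    simp [ENNReal.toReal_ofReal, hw0 i, sub_nonneg.2 (hw1 i)]

/-! ### Strong duality -/

lemma ip_add_right {n : ℕ} (u x y : Fin n → ℝ) : ip u (x + y) = ip u x + ip u y := by
  simp [ip, mul_add, Finset.sum_add_distrib]

lemma ip_smul_right {n : ℕ} (c : ℝ) (u x : Fin n → ℝ) : ip u (c • x) = c * ip u x := by
  simp only [ip, Finset.mul_sum, Pi.smul_apply, smul_eq_mul]
  exact Finset.sum_congr rfl fun i _ => by ring

lemma ip_add_left {n : ℕ} (u x y : Fin n → ℝ) : ip (x + y) u = ip x u + ip y u := by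
  simp [ip, add_mul, Finset.sum_add_distrib]

lemma ip_smul_left {n : ℕ} (c : ℝ) (u x : Fin n → ℝ) : ip (c • x) u = c * ip x u := by
  simp only [ip, Finset.mul_sum, Pi.smul_apply, smul_eq_mul]
  exact Finset.sum_congr rfl fun i _ => by ring

/-- The (negated) Lagrangian. -/
noncomputable def lagr {n N : ℕ} (ξ : Fin N → Fin n → ℝ) (v : Fin n → ℝ) (t ε : ℝ)
    (x : Fin N → ℝ × (Fin n → ℝ)) (y : ℝ × (Fin N → Fin n → ℝ)) : ℝ :=
  -((1 / (N : ℝ)) * ∑ i, ((x i).1 * (ip v (ξ i) - t) + ip v (x i).2 - ip (y.2 i) (x i).2) + y.1 * ε)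

/-- Primal feasible set in perspective form. -/
def pset {n N : ℕ} (ξ : Fin N → Fin n → ℝ) (a b : Fin n → ℝ) : Set (Fin N → ℝ × (Fin n → ℝ)) :=
  {x | ∀ i, 0 ≤ (x i).1 ∧ (x i).1 ≤ 1 ∧ ∀ j, (x i).1 * (a j - ξ i j) ≤ (x i).2 j ∧
    (x i).2 j ≤ (x i).1 * (b j - ξ i j)}

lemma lagr_minimax {n N : ℕ} (q : ℝ≥0∞) (hq : 1 ≤ q) (a b : Fin n → ℝ)
    (ξ : Fin N → Fin n → ℝ) (hξ : ∀ k, ∀ i, a i ≤ ξ k i ∧ ξ k i ≤ b i)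
    (v : Fin n → ℝ) (t ε M : ℝ)
    (h : ∀ x ∈ pset ξ a b, ∃ y : ℝ × (Fin N → Fin n → ℝ),
      (∀ i, _root_.lpNorm q (y.2 i) ≤ y.1) ∧ M < lagr ξ v t ε x y) :
    ∃ y : ℝ × (Fin N → Fin n → ℝ), (∀ i, _root_.lpNorm q (y.2 i) ≤ y.1) ∧
      ∀ x ∈ pset ξ a b, M < lagr ξ v t ε x y := by
  refine minimax_aux (pset ξ a b)
    {y : ℝ × (Fin N → Fin n → ℝ) | ∀ i, _root_.lpNorm q (y.2 i) ≤ y.1} (lagr ξ v t ε)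
    ⟨0, fun i => ?_⟩ ?_ ?_ ?_ ?_ ?_ ?_ ?_ M h
  · simp
  · refine IsCompact.of_isClosed_subset
      (isCompact_Icc (a := fun i => ((0 : ℝ), a - ξ i)) (b := fun i => ((1 : ℝ), b - ξ i))) ?_ ?_
    · unfold pset
      simp only [Set.ofPred_forall, Set.ofPred_and]
      refine isClosed_iInter fun i => (isClosed_le (by fun_prop) (by fun_prop)).inter
        ((isClosed_le (by fun_prop) (by fun_prop)).inter (isClosed_iInter fun j =>
        (isClosed_le (by fun_prop) (by fun_prop)).inter (isClosed_le (by fun_prop) (by fun_prop))))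
    · intro x hx
      refine ⟨fun i => ⟨(hx i).1, fun j => ?_⟩, fun i => ⟨(hx i).2.1, fun j => ?_⟩⟩
      · obtain ⟨h0, h1, h2⟩ := hx i
        have := (h2 j).1
        simp only [Pi.sub_apply]
        nlinarith [hξ i j]
      · obtain ⟨h0, h1, h2⟩ := hx i
        have := (h2 j).2
        simp only [Pi.sub_apply]
        nlinarith [hξ i j]
  · intro x hx x' hx' c d hc hd hcd i
    obtain ⟨h0, h1, h2⟩ := hx i
    obtain ⟨h0', h1', h2'⟩ := hx' i
    simp only [Pi.add_apply, Pi.smul_apply, Prod.fst_add, Prod.smul_fst, smul_eq_mul,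
      Prod.snd_add, Prod.smul_snd]
    refine ⟨by positivity, by nlinarith, fun j => ⟨?_, ?_⟩⟩
    · nlinarith [mul_le_mul_of_nonneg_left (h2 j).1 hc, mul_le_mul_of_nonneg_left (h2' j).1 hd]
    · nlinarith [mul_le_mul_of_nonneg_left (h2 j).2 hc, mul_le_mul_of_nonneg_left (h2' j).2 hd]
  · intro y hy y' hy' c d hc hd hcd i
    simp only [Pi.add_apply, Pi.smul_apply, Prod.fst_add, Prod.smul_fst, smul_eq_mul,
      Prod.snd_add, Prod.smul_snd]
    refine (lpNorm_add_le q hq _ _).trans ?_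
    rw [lpNorm_smul q hq c hc, lpNorm_smul q hq d hd]
    exact add_le_add (mul_le_mul_of_nonneg_left (hy i) hc) (mul_le_mul_of_nonneg_left (hy' i) hd)
  · intro y; unfold lagr ip; fun_prop
  · intro x; unfold lagr ip; fun_prop
  · intro y x x' c d hcd
    simp only [lagr, Pi.add_apply, Pi.smul_apply, Prod.fst_add, Prod.smul_fst, smul_eq_mul,
      Prod.snd_add, Prod.smul_snd, ip_add_right, ip_smul_right]
    have : ∑ i, ((c * (x i).1 + d * (x' i).1) * (ip v (ξ i) - t) +
        (c * ip v (x i).2 + d * ip v (x' i).2) -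
        (c * ip (y.2 i) (x i).2 + d * ip (y.2 i) (x' i).2)) =
        c * ∑ i, ((x i).1 * (ip v (ξ i) - t) + ip v (x i).2 - ip (y.2 i) (x i).2) +
        d * ∑ i, ((x' i).1 * (ip v (ξ i) - t) + ip v (x' i).2 - ip (y.2 i) (x' i).2) := by
      rw [Finset.mul_sum, Finset.mul_sum, ← Finset.sum_add_distrib]
      exact Finset.sum_congr rfl fun i _ => by ring
    rw [this]
    linear_combination (y.1 * ε) * hcd
  · intro x y y' c d hcd
    simp only [lagr, Pi.add_apply, Pi.smul_apply, Prod.fst_add, Prod.smul_fst, smul_eq_mul,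
      Prod.snd_add, Prod.smul_snd, ip_add_left, ip_smul_left]
    have : ∑ i, ((x i).1 * (ip v (ξ i) - t) + ip v (x i).2 -
        (c * ip (y.2 i) (x i).2 + d * ip (y'.2 i) (x i).2)) =
        c * ∑ i, ((x i).1 * (ip v (ξ i) - t) + ip v (x i).2 - ip (y.2 i) (x i).2) +
        d * ∑ i, ((x i).1 * (ip v (ξ i) - t) + ip v (x i).2 - ip (y'.2 i) (x i).2) := by
      rw [Finset.mul_sum, Finset.mul_sum, ← Finset.sum_add_distrib]
      refine Finset.sum_congr rfl fun i _ => ?_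
      linear_combination (-(x i).1 * (ip v (ξ i) - t) - ip v (x i).2) * hcd
    rw [this]
    ring

lemma box_measurable {n : ℕ} (a b : Fin n → ℝ) :
    MeasurableSet {x : Fin n → ℝ | ∀ i, a i ≤ x i ∧ x i ≤ b i} := by
  have : {x : Fin n → ℝ | ∀ i, a i ≤ x i ∧ x i ≤ b i} = Set.Icc a b := by
    ext x; simp [Pi.le_def, forall_and]
  rw [this]; exact measurableSet_Icc

lemma strong {n : ℕ} (hn : 1 ≤ n) (p q : ℝ≥0∞) (hp : 1 ≤ p) (hpq : 1 / p + 1 / q = 1)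
    (a b : Fin n → ℝ) {N : ℕ} (hN : 1 ≤ N) (ξ : Fin N → Fin n → ℝ)
    (hξ : ∀ k, ∀ i, a i ≤ ξ k i ∧ ξ k i ≤ b i)
    (v : Fin n → ℝ) (t ε M : ℝ)
    (hM : ∀ μ : Measure (Fin n → ℝ), IsProbabilityMeasure μ →
          μ {x : Fin n → ℝ | ∀ i, a i ≤ x i ∧ x i ≤ b i}ᶜ = 0 →
          dW p (empirical N ξ) μ ≤ ENNReal.ofReal ε → ∫ x, hfun v t x ∂μ < M) :
    ∃ (s : Fin N → ℝ) (lam : ℝ) (γ η : Fin N → Fin n → ℝ),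
        (∀ i, ip (v + γ i - η i) (ξ i) - ip (γ i) a + ip (η i) b - t ≤ s i ∧
          _root_.lpNorm q (v + γ i - η i) ≤ lam ∧
          (∀ j, 0 ≤ γ i j) ∧ (∀ j, 0 ≤ η i j) ∧ 0 ≤ s i) ∧
        (1 / (N : ℝ)) * ∑ i, s i + lam * ε ≤ M := by
  have hq := one_le_conj p q hpq
  have hN0 : (0 : ℝ) < N := by exact_mod_cast hN
  obtain ⟨y, hy, hyx⟩ := lagr_minimax q hq a b ξ hξ v t ε (-M) (by
    intro x hx
    set V := (1 / (N : ℝ)) * ∑ i, ((x i).1 * (ip v (ξ i) - t) + ip v (x i).2) with hV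
    set C := (1 / (N : ℝ)) * ∑ i, _root_.lpNorm p (x i).2 with hC
    by_cases hcost : C ≤ ε
    · refine ⟨0, fun i => by simp [lpNorm_zero q hq], ?_⟩
      have hz : ∀ i, (x i).1 = 0 → (x i).2 = 0 := by
        intro i h0
        ext j
        have := (hx i).2.2 j
        rw [h0] at this
        simp only [zero_mul] at this
        exact le_antisymm this.2 this.1
      have hwz : ∀ i, (x i).1 • ((x i).1)⁻¹ • (x i).2 = (x i).2 := by
        intro i
        by_cases h0 : (x i).1 = 0
        · simp [h0, hz i h0]
        · rw [smul_smul, mul_inv_cancel₀ h0, one_smul]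
      obtain ⟨μ, h1, h2, h3, h4⟩ := construct hN p hp ξ (fun i => ξ i + ((x i).1)⁻¹ • (x i).2)
        {x : Fin n → ℝ | ∀ i, a i ≤ x i ∧ x i ≤ b i} (box_measurable a b) hξ (by
          intro i j
          by_cases h0 : (x i).1 = 0
          · simpa [h0] using hξ i j
          · have hpos : 0 < (x i).1 := lt_of_le_of_ne (hx i).1 (Ne.symm h0)
            have := (hx i).2.2 j
            simp only [Pi.add_apply, Pi.smul_apply, smul_eq_mul]
            rw [← sub_le_iff_le_add', ← le_sub_iff_add_le', inv_mul_eq_div, le_div_iff₀ hpos,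
              div_le_iff₀ hpos]
            constructor <;> linarith)
        (fun i => (x i).1) (fun i => (hx i).1) (fun i => (hx i).2.1) (hfun v t) ε (by
          refine le_of_eq_of_le ?_ hcost
          rw [hC]
          congr 1
          refine Finset.sum_congr rfl fun i _ => ?_
          rw [sub_add_cancel_left, lpNorm_neg p hp, ← lpNorm_smul p hp _ (hx i).1, hwz])
      have h5 := hM μ h1 h2 h3
      rw [h4] at h5
      have h6 : V ≤ (1 / (N : ℝ)) * ∑ i, ((1 - (x i).1) * hfun v t (ξ i) +
          (x i).1 * hfun v t (ξ i + ((x i).1)⁻¹ • (x i).2)) := by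
        rw [hV]
        refine mul_le_mul_of_nonneg_left (Finset.sum_le_sum fun i _ => ?_) (by positivity)
        have e1 : 0 ≤ (1 - (x i).1) * hfun v t (ξ i) :=
          mul_nonneg (by linarith [(hx i).2.1]) (hfun_nonneg _ _ _)
        have e2 : (x i).1 * (ip (ξ i + ((x i).1)⁻¹ • (x i).2) v - t) ≤
            (x i).1 * hfun v t (ξ i + ((x i).1)⁻¹ • (x i).2) :=
          mul_le_mul_of_nonneg_left (le_max_left _ _) (hx i).1
        have e3 : (x i).1 * ip (((x i).1)⁻¹ • (x i).2) v = ip v (x i).2 := by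
          rw [← ip_smul_left, hwz, ip_comm']
        rw [ip_add_left, ip_comm' (ξ i) v] at e2
        linarith
      have h7 : lagr ξ v t ε x 0 = -V := by
        simp [lagr, hV, ip]
      rw [h7]
      linarith
    · push Not at hcost
      choose u hu1 hu2 using fun i => ip_attain hn p q hpq (x i).2
      set c := (|V - M| + 1) / (C - ε) with hc
      have hd : 0 < C - ε := by linarith
      have hc0 : 0 ≤ c := by positivity
      refine ⟨(c, fun i => c • u i), fun i => ?_, ?_⟩
      · simp only [lpNorm_smul q hq c hc0]
        nlinarith [hu1 i]
      · have h7 : lagr ξ v t ε x (c, fun i => c • u i) = -(V - c * (C - ε)) := by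
          simp only [lagr, ip_smul_left, hu2, Finset.sum_sub_distrib, hV, hC, ← Finset.mul_sum]
          ring
        have h8 : c * (C - ε) = |V - M| + 1 := by
          rw [hc]; field_simp
        rw [h7, h8]
        linarith [le_abs_self (V - M)])
  set γ : Fin N → Fin n → ℝ := fun i j => max (y.2 i j - v j) 0 with hγ
  set η : Fin N → Fin n → ℝ := fun i j => max (v j - y.2 i j) 0 with hη
  have hu : ∀ i, v + γ i - η i = y.2 i := by
    intro i; ext j
    simp only [Pi.add_apply, Pi.sub_apply, hγ, hη]
    rcases le_total (v j) (y.2 i j) with h | h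
    · rw [max_eq_left (by linarith), max_eq_right (by linarith)]; ring
    · rw [max_eq_right (by linarith), max_eq_left (by linarith)]; ring
  set e : Fin N → ℝ := fun i => ip (y.2 i) (ξ i) - ip (γ i) a + ip (η i) b - t with he
  refine ⟨fun i => max (e i) 0, y.1, γ, η, fun i => ⟨?_, ?_, fun j => le_max_right _ _,
    fun j => le_max_right _ _, le_max_right _ _⟩, ?_⟩
  · rw [hu]; exact le_max_left _ _
  · rw [hu]; exact hy i
  · let x : Fin N → ℝ × (Fin n → ℝ) := fun i =>
      if e i ≤ 0 then 0 else (1, fun j => (if y.2 i j ≤ v j then b j else a j) - ξ i j)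
    have hx : x ∈ pset ξ a b := by
      intro i
      by_cases h : e i ≤ 0
      · simp [x, h]
      · simp only [x, h, if_false]
        refine ⟨zero_le_one, le_refl _, fun j => ?_⟩
        have := hξ i j
        split_ifs <;> constructor <;> linarith
    have h1 := hyx x hx
    unfold lagr at h1
    have h2 : ∀ i, (x i).1 * (ip v (ξ i) - t) + ip v (x i).2 - ip (y.2 i) (x i).2 =
        max (e i) 0 := by
      intro i
      by_cases h : e i ≤ 0
      · simp [x, h, ip]
      · simp only [x, h, if_false]
        rw [max_eq_left (by linarith)]
        simp only [he, one_mul]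
        have : ip v (ξ i) + ip v (fun j => (if y.2 i j ≤ v j then b j else a j) - ξ i j) -
            ip (y.2 i) (fun j => (if y.2 i j ≤ v j then b j else a j) - ξ i j) =
            ip (y.2 i) (ξ i) - ip (γ i) a + ip (η i) b := by
          simp only [ip, ← Finset.sum_add_distrib, ← Finset.sum_sub_distrib]
          refine Finset.sum_congr rfl fun j _ => ?_
          simp only [hγ, hη]
          split_ifs with h
          · rw [max_eq_right (by linarith), max_eq_left (by linarith)]; ring
          · rw [max_eq_left (by linarith), max_eq_right (by linarith)]; ring
        linarith
    simp only [h2] at h1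
    linarith

/-- Theorem 2, worst-case METT with support set: the infimum over `t` of
`t + (1/α)·sup{∫ h(v,t,·) dμ : μ supported on [a,b], d_W(F_N,μ) ≤ ε}` equals the optimal
value of the dual convex program over `(t,s,λ,γ,η)`. -/
theorem stmt10 (n : ℕ) (hn : 1 ≤ n) (p q : ℝ≥0∞) (hp : 1 ≤ p) (hpq : 1 / p + 1 / q = 1)
    (a b : Fin n → ℝ) (hab : ∀ i, a i ≤ b i)
    (N : ℕ) (hN : 1 ≤ N) (ξ : Fin N → Fin n → ℝ)
    (hξ : ∀ k, ∀ i, a i ≤ ξ k i ∧ ξ k i ≤ b i)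
    (v : Fin n → ℝ) (α : ℝ) (hα : 0 < α) (hα1 : α ≤ 1) (ε : ℝ) (hε : 0 ≤ ε) :
    (⨅ t : ℝ, t + (1 / α) *
        sSup {r : ℝ | ∃ μ : Measure (Fin n → ℝ), IsProbabilityMeasure μ ∧
          μ {x : Fin n → ℝ | ∀ i, a i ≤ x i ∧ x i ≤ b i}ᶜ = 0 ∧
          dW p (empirical N ξ) μ ≤ ENNReal.ofReal ε ∧ r = ∫ x, hfun v t x ∂μ}) =
      sInf {y : ℝ | ∃ (t : ℝ) (s : Fin N → ℝ) (lam : ℝ) (γ η : Fin N → Fin n → ℝ),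
        (∀ i, ip (v + γ i - η i) (ξ i) - ip (γ i) a + ip (η i) b - t ≤ s i ∧
          lpNorm q (v + γ i - η i) ≤ lam ∧
          (∀ j, 0 ≤ γ i j) ∧ (∀ j, 0 ≤ η i j) ∧ 0 ≤ s i) ∧
        y = t + (1 / α) * ((1 / (N : ℝ)) * ∑ i, s i + lam * ε)} := by
  have hq := one_le_conj p q hpq
  have hN0 : (0 : ℝ) < N := by exact_mod_cast hN
  have hα' : 0 < 1 / α := by positivity
  set A : ℝ → Set ℝ := fun t => {r : ℝ | ∃ μ : Measure (Fin n → ℝ), IsProbabilityMeasure μ ∧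
          μ {x : Fin n → ℝ | ∀ i, a i ≤ x i ∧ x i ≤ b i}ᶜ = 0 ∧
          dW p (empirical N ξ) μ ≤ ENNReal.ofReal ε ∧ r = ∫ x, hfun v t x ∂μ} with hA
  -- weak duality
  have weak : ∀ (t : ℝ) (s : Fin N → ℝ) (lam : ℝ) (γ η : Fin N → Fin n → ℝ),
        (∀ i, ip (v + γ i - η i) (ξ i) - ip (γ i) a + ip (η i) b - t ≤ s i ∧
          lpNorm q (v + γ i - η i) ≤ lam ∧
          (∀ j, 0 ≤ γ i j) ∧ (∀ j, 0 ≤ η i j) ∧ 0 ≤ s i) →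
        ∀ r ∈ A t, r ≤ (1 / (N : ℝ)) * ∑ i, s i + lam * ε := by
    rintro t s lam γ η hf r ⟨μ, -, h2, h3, rfl⟩
    refine weak_measure hN p hp ξ {x : Fin n → ℝ | ∀ i, a i ≤ x i ∧ x i ≤ b i} (hfun v t)
      (hfun_continuous v t) (hfun_nonneg v t) s (fun i => (hf i).2.2.2.2) lam
      ((lpNorm_nonneg q hq _).trans (hf ⟨0, hN⟩).2.1) ?_ μ h2 ε hε h3
    intro i y hy
    obtain ⟨f1, f2, f3, f4, f5⟩ := hf i
    exact weak_pointwise p q hp hpq a b v (ξ i) (γ i) (η i) y t (s i) lam f1 f2 f3 f4 f5 hy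
  -- a feasible dual point
  have feas : ∀ t : ℝ, ∃ (s : Fin N → ℝ) (lam : ℝ) (γ η : Fin N → Fin n → ℝ),
        (∀ i, ip (v + γ i - η i) (ξ i) - ip (γ i) a + ip (η i) b - t ≤ s i ∧
          lpNorm q (v + γ i - η i) ≤ lam ∧
          (∀ j, 0 ≤ γ i j) ∧ (∀ j, 0 ≤ η i j) ∧ 0 ≤ s i) := by
    intro t
    refine ⟨fun i => max (ip v (ξ i) - t) 0, _root_.lpNorm q v, 0, 0, fun i => ?_⟩
    have h0 : ∀ x : Fin n → ℝ, ip 0 x = 0 := fun x => by simp [ip]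
    simp [h0]
  -- the empirical distribution is admissible
  have emp : ∀ t : ℝ, (1 / (N : ℝ)) * ∑ i, hfun v t (ξ i) ∈ A t := by
    intro t
    obtain ⟨μ, h1, h2, h3, h4⟩ := construct hN p hp ξ ξ
      {x : Fin n → ℝ | ∀ i, a i ≤ x i ∧ x i ≤ b i} (box_measurable a b) hξ hξ
      (fun _ => 0) (fun _ => le_refl _) (fun _ => zero_le_one) (hfun v t) ε (by simpa using hε)
    exact ⟨μ, h1, h2, h3, by rw [h4]; simp⟩
  have bdd : ∀ t, BddAbove (A t) := by
    intro t
    obtain ⟨s, lam, γ, η, hf⟩ := feas t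
    exact ⟨_, weak t s lam γ η hf⟩
  set m := (1 / (N : ℝ)) * ∑ i, ip (ξ i) v with hm
  have lower : ∀ t, m ≤ t + (1 / α) * sSup (A t) := by
    intro t
    have h1 := le_csSup (bdd t) (emp t)
    have h2 : m - t ≤ (1 / (N : ℝ)) * ∑ i, hfun v t (ξ i) := by
      have : m - t = (1 / (N : ℝ)) * ∑ i, (ip (ξ i) v - t) := by
        rw [Finset.sum_sub_distrib, hm]
        simp
        field_simp
      rw [this]
      exact mul_le_mul_of_nonneg_left (Finset.sum_le_sum fun i _ => le_max_left _ _)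
        (by positivity)
    have h3 : 0 ≤ (1 / (N : ℝ)) * ∑ i, hfun v t (ξ i) :=
      mul_nonneg (by positivity) (Finset.sum_nonneg fun i _ => hfun_nonneg _ _ _)
    have h4 : 1 ≤ 1 / α := by rw [le_div_iff₀ hα]; linarith
    have h5 : sSup (A t) ≤ (1 / α) * sSup (A t) := le_mul_of_one_le_left (h3.trans h1) h4
    linarith
  have step : ∀ (t : ℝ) (s : Fin N → ℝ) (lam : ℝ) (γ η : Fin N → Fin n → ℝ),
        (∀ i, ip (v + γ i - η i) (ξ i) - ip (γ i) a + ip (η i) b - t ≤ s i ∧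
          lpNorm q (v + γ i - η i) ≤ lam ∧
          (∀ j, 0 ≤ γ i j) ∧ (∀ j, 0 ≤ η i j) ∧ 0 ≤ s i) →
        t + (1 / α) * sSup (A t) ≤ t + (1 / α) * ((1 / (N : ℝ)) * ∑ i, s i + lam * ε) := by
    intro t s lam γ η hf
    have h1 := csSup_le (Set.nonempty_of_mem (emp t)) (weak t s lam γ η hf)
    have h2 := mul_le_mul_of_nonneg_left h1 hα'.le
    linarith
  apply le_antisymm
  · refine le_csInf ?_ ?_
    · obtain ⟨s, lam, γ, η, hf⟩ := feas 0
      exact ⟨_, 0, s, lam, γ, η, hf, rfl⟩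
    · rintro _ ⟨t, s, lam, γ, η, hf, rfl⟩
      have hb : BddBelow (Set.range fun t : ℝ => t + (1 / α) * sSup (A t)) := by
        refine ⟨m, ?_⟩
        rintro _ ⟨t, rfl⟩
        exact lower t
      exact (ciInf_le hb t).trans (step t s lam γ η hf)
  · refine le_ciInf fun t => le_of_forall_pos_le_add fun δ hδ => ?_
    obtain ⟨s, lam, γ, η, hf, hle⟩ := strong hn p q hp hpq a b hN ξ hξ v t ε
      (sSup (A t) + α * δ) (by
        intro μ h1 h2 h3
        have : ∫ x, hfun v t x ∂μ ≤ sSup (A t) := le_csSup (bdd t) ⟨μ, h1, h2, h3, rfl⟩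
        have : 0 < α * δ := by positivity
        linarith)
    refine le_trans (csInf_le ?_ ⟨t, s, lam, γ, η, hf, rfl⟩) ?_
    · refine ⟨m, ?_⟩
      rintro _ ⟨t, s, lam, γ, η, hf, rfl⟩
      exact (lower t).trans (step t s lam γ η hf)
    · have h2 := mul_le_mul_of_nonneg_left hle hα'.le
      have h3 : (1 / α) * (sSup (A t) + α * δ) = (1 / α) * sSup (A t) + δ := by
        field_simp
      linarith
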